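/- Let G be a finite group, p a prime, S a Sylow p-subgroup of G, and suppose every element of G of order p, and every element of order 4 when p = 2, lies in Z(G). Then G is p-nilpotent. -/

import Mathlib

/-!
Let `x` be a `p'`-element normalizing a `p`-subgroup `Q`, and suppose that `x` centralizes the
elements of `Q` of order `p` (and `4` if `p = 2`). By induction `x` centralizes every proper
`x`-invariant subgroup of `Q`, in particular `Q'`, hence `[Q, x]` centralizes `Q'`. If `Q'` is not
central in `Q`, then `x` centralizes `C_Q(Q') ≥ [Q, x]`; otherwise `Q` has class at most two, and
the power formula there shows that `[u, x]` has order dividing `p` (or `4`) as soon as `x`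
centralizes `u ^ p`. Either way `[Q, x, x] = 1`, so `[Q, x] = 1` by coprimality.

Thus `N_G(D) / C_G(D)` is a `p`-group for every `p`-subgroup `D`, which is Frobenius' criterion for
`p`-nilpotence: it lets a Sylow `p`-subgroup `S` control its own fusion, so the focal subgroup
of `S` is `S'`, and transfer gives `O^p(G) < G` whenever `p` divides `|G|`. Applied to `O^p(G)`,
which equals `O^p(O^p(G))`, this says that `O^p(G)` has order prime to `p`.
-/

open Subgroup
open scoped commutatorElement Pointwise

section ClassTwo

variable {G : Type*} [Group G] {a b u v : G}

theorem pow_mul_eq_mul_pow_mul_commutatorElement_pow (ha : Commute ⁅b, a⁆ a)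
    (hb : Commute ⁅b, a⁆ b) (n : ℕ) : b ^ n * a = a * b ^ n * ⁅b, a⁆ ^ n := by
  have hconj : SemiconjBy a (b * ⁅b, a⁆) b := by
    rw [SemiconjBy, ← hb.eq, ← mul_assoc, ← ha.eq, commutatorElement_def]
    group
  rw [mul_assoc, ← hb.symm.mul_pow]
  exact (hconj.pow_right n).eq.symm

theorem commutatorElement_pow_eq_commutatorElement_pow_left (ha : Commute ⁅b, a⁆ a)
    (hb : Commute ⁅b, a⁆ b) (n : ℕ) : ⁅b, a⁆ ^ n = ⁅b ^ n, a⁆ := by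
  have hcomm : Commute (⁅b, a⁆ ^ n) (a * b ^ n) := (ha.pow_left n).mul_right (hb.pow_pow n n)
  rw [commutatorElement_def (b ^ n), pow_mul_eq_mul_pow_mul_commutatorElement_pow ha hb,
    ← hcomm.eq]
  group

theorem mul_pow_eq_mul_commutatorElement_pow_choose (ha : Commute ⁅b, a⁆ a)
    (hb : Commute ⁅b, a⁆ b) (n : ℕ) :
    (a * b) ^ n = a ^ n * b ^ n * ⁅b, a⁆ ^ n.choose 2 := by
  induction n with
  | zero => simp
  | succ n ih =>
    have hcab : Commute (⁅b, a⁆ ^ n.choose 2) (a * b) := (ha.mul_right hb).pow_left _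
    calc (a * b) ^ (n + 1)
        = a ^ n * b ^ n * (⁅b, a⁆ ^ n.choose 2 * (a * b)) := by rw [pow_succ, ih, mul_assoc]
      _ = a ^ n * (b ^ n * a) * b * ⁅b, a⁆ ^ n.choose 2 := by
          rw [hcab.eq]; simp only [mul_assoc]
      _ = a ^ n * a * b ^ n * (⁅b, a⁆ ^ n * b) * ⁅b, a⁆ ^ n.choose 2 := by
          rw [pow_mul_eq_mul_pow_mul_commutatorElement_pow ha hb]; simp only [mul_assoc]
      _ = a ^ (n + 1) * b ^ (n + 1) * ⁅b, a⁆ ^ (n + 1).choose 2 := by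
          rw [(hb.pow_left n).eq, Nat.choose_succ_succ' n 1, Nat.choose_one_right, pow_add ⁅b, a⁆,
            pow_succ a, pow_succ b]
          simp only [mul_assoc]

theorem inv_mul_pow_eq_one_of_pow_eq_pow {p q : ℕ} (hpq : p ∣ q) (hpq₂ : p ∣ q.choose 2)
    (hu : Commute ⁅v, u⁻¹⁆ u) (hv : Commute ⁅v, u⁻¹⁆ v) (huv : v ^ p = u ^ p) :
    (u⁻¹ * v) ^ q = 1 := by
  have hcomm_pow : ⁅v, u⁻¹⁆ ^ p = 1 := by
    rw [commutatorElement_pow_eq_commutatorElement_pow_left hu.inv_right hv, huv]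
    exact ((Commute.refl u).inv_right.pow_left p).commutator_eq
  obtain ⟨k, rfl⟩ := hpq
  obtain ⟨l, hl⟩ := hpq₂
  rw [mul_pow_eq_mul_commutatorElement_pow_choose hu.inv_right hv, hl, pow_mul ⁅v, u⁻¹⁆,
    hcomm_pow, one_pow, mul_one, pow_mul v, huv, ← pow_mul, inv_pow, inv_mul_cancel]

end ClassTwo

theorem commutator_lt_of_isPGroup {G : Type*} [Group G] {p : ℕ} [Fact p.Prime] {Q : Subgroup G}
    [Finite Q] (hQ : IsPGroup p Q) (hne : Q ≠ ⊥) : ⁅Q, Q⁆ < Q := by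
  have := hQ.isNilpotent
  have := Q.nontrivial_iff_ne_bot.mpr hne
  have hlt : commutator Q < ⊤ := Group.IsSolvable.commutator_lt_top_of_nontrivial Q
  rwa [← map_subtype_lt_map_subtype, map_subtype_commutator, ← MonoidHom.range_eq_map,
    range_subtype] at hlt

section CoprimeAutomorphism

variable {G : Type*} [Group G] {p q : ℕ} {φ : MulAut G} {Q : Subgroup G}

theorem mulAut_apply_eq_self_of_coprime {u : G} (hfix : φ (u⁻¹ * φ u) = u⁻¹ * φ u)
    (hcop : (orderOf φ).Coprime (orderOf (u⁻¹ * φ u))) : φ u = u := by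
  have hpow : ∀ n : ℕ, (φ ^ n) u = u * (u⁻¹ * φ u) ^ n := by
    intro n
    induction n with
    | zero => simp
    | succ n ih =>
      rw [pow_succ', MulAut.mul_apply, ih, map_mul, map_pow, hfix, pow_succ', ← mul_assoc,
        mul_inv_cancel_left]
  have hone : (u⁻¹ * φ u) ^ orderOf φ = 1 := by
    simpa [pow_orderOf_eq_one] using hpow (orderOf φ)
  have htriv : u⁻¹ * φ u = 1 := orderOf_eq_one_iff.mp
    (Nat.eq_one_of_dvd_coprimes hcop (orderOf_dvd_of_pow_eq_one hone) dvd_rfl)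
  exact (inv_mul_eq_one.mp htriv).symm

theorem mulAut_apply_eq_self_of_isPGroup_of_coprime (hQ : IsPGroup p Q)
    (hφ : p.Coprime (orderOf φ)) (hinv : ∀ u ∈ Q, φ u ∈ Q) {u : G} (hu : u ∈ Q)
    (hfix : φ (u⁻¹ * φ u) = u⁻¹ * φ u) : φ u = u := by
  refine mulAut_apply_eq_self_of_coprime hfix (Nat.Coprime.symm ?_)
  have hmem : u⁻¹ * φ u ∈ Q := mul_mem (inv_mem hu) (hinv u hu)
  simpa only [orderOf_mk] using hQ.orderOf_coprime hφ ⟨_, hmem⟩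

theorem mulAut_apply_eq_self_of_le_centralizer_commutator (hpq : p ∣ q) (hpq₂ : p ∣ q.choose 2)
    (hQ : IsPGroup p Q) (hφ : p.Coprime (orderOf φ)) (hinv : ∀ u ∈ Q, φ u ∈ Q)
    (hfix : ∀ w ∈ Q, w ^ q = 1 → φ w = w)
    (hcent : Q ≤ centralizer ((⁅Q, Q⁆ : Subgroup G) : Set G)) :
    ∀ u ∈ Q, φ u = u := by
  have hfix_of_pow : ∀ u ∈ Q, φ (u ^ p) = u ^ p → φ u = u := by
    intro u hu hup
    refine mulAut_apply_eq_self_of_isPGroup_of_coprime hQ hφ hinv hu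
      (hfix _ (mul_mem (inv_mem hu) (hinv u hu)) ?_)
    have hcomm := commutator_mem_commutator (hinv u hu) (inv_mem hu)
    exact inv_mul_pow_eq_one_of_pow_eq_pow hpq hpq₂
      (mem_centralizer_iff.mp (hcent hu) _ hcomm)
      (mem_centralizer_iff.mp (hcent (hinv u hu)) _ hcomm) (by rw [← map_pow, hup])
  have hfix_of_pow_pow : ∀ k : ℕ, ∀ u ∈ Q, u ^ p ^ k = 1 → φ u = u := by
    intro k
    induction k with
    | zero =>
      intro u _ h
      rw [pow_zero, pow_one] at h
      rw [h, map_one]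
    | succ k ih =>
      intro u hu h
      exact hfix_of_pow u hu (ih _ (pow_mem hu p) (by rw [← pow_mul, ← pow_succ', h]))
  intro u hu
  obtain ⟨k, hk⟩ := isPGroup_iff_pow_pow_eq_one.mp hQ ⟨u, hu⟩
  exact hfix_of_pow_pow k u hu (congrArg Subtype.val hk)

theorem mulAut_apply_eq_self_of_pow_eq_one [Finite G] [Fact p.Prime] (hpq : p ∣ q)
    (hpq₂ : p ∣ q.choose 2) (hφ : p.Coprime (orderOf φ)) (hQ : IsPGroup p Q)
    (hinv : ∀ u ∈ Q, φ u ∈ Q) (hfix : ∀ w ∈ Q, w ^ q = 1 → φ w = w) : ∀ u ∈ Q, φ u = u := by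
  induction Q using WellFoundedLT.induction with
  | ind Q ih =>
  rcases eq_or_ne Q ⊥ with rfl | hne
  · rintro u hu
    rw [mem_bot.mp hu, map_one]
  have fix_of_lt : ∀ R < Q, (∀ u ∈ R, φ u ∈ R) → ∀ u ∈ R, φ u = u := fun R hR hRinv =>
    ih R hR (hQ.to_le hR.le) hRinv fun w hw => hfix w (hR.le hw)
  have hcomm_inv : ⁅Q, Q⁆ ≤ ⁅Q, Q⁆.comap φ.toMonoidHom := commutator_le.mpr fun u hu v hv => by
    rw [mem_comap, map_commutatorElement]
    exact commutator_mem_commutator (hinv u hu) (hinv v hv)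
  have hcomm_fix : ∀ m ∈ ⁅Q, Q⁆, φ m = m :=
    fix_of_lt _ (commutator_lt_of_isPGroup hQ hne) hcomm_inv
  by_cases hcent : Q ≤ centralizer ((⁅Q, Q⁆ : Subgroup G) : Set G)
  · exact mulAut_apply_eq_self_of_le_centralizer_commutator hpq hpq₂ hQ hφ hinv hfix hcent
  have hcent_fix : ∀ c ∈ Q ⊓ centralizer ((⁅Q, Q⁆ : Subgroup G) : Set G), φ c = c := by
    refine fix_of_lt _ (inf_lt_left.mpr hcent) fun c hc => ⟨hinv c hc.1, ?_⟩
    refine mem_centralizer_iff.mpr fun m hm => ?_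
    rw [← hcomm_fix m hm, ← map_mul, mem_centralizer_iff.mp hc.2 m hm, map_mul]
  intro u hu
  refine mulAut_apply_eq_self_of_isPGroup_of_coprime hQ hφ hinv hu
    (hcent_fix _ ⟨Q.mul_mem (Q.inv_mem hu) (hinv u hu), mem_centralizer_iff.mpr fun m hm => ?_⟩)
  have hconj : φ u * m * (φ u)⁻¹ = u * m * u⁻¹ := by
    have humu : u * m * u⁻¹ ∈ ⁅Q, Q⁆ :=
      (mem_normalizer_iff.mp (normalizer_commutator_ge_left Q Q hu) m).mp hm
    simpa only [map_mul, map_inv, hcomm_fix m hm] using hcomm_fix _ humu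
  calc m * (u⁻¹ * φ u) = u⁻¹ * (u * m * u⁻¹) * φ u := by group
    _ = u⁻¹ * φ u * m := by rw [← hconj]; group

end CoprimeAutomorphism

/-- The subgroup `O^p(G)` of a finite group `G`, encoded as the subgroup generated by the
`p'`-elements: the smallest normal subgroup whose quotient is a `p`-group. -/
def pResidual (p : ℕ) (G : Type*) [Group G] : Subgroup G :=
  closure {g | p.Coprime (orderOf g)}

section PResidual

variable {G : Type*} [Group G] {p : ℕ}

theorem mem_pResidual_of_coprime {g : G} (hg : p.Coprime (orderOf g)) : g ∈ pResidual p G :=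
  subset_closure hg

instance pResidual_characteristic : (pResidual p G).Characteristic := by
  refine characteristic_iff_le_comap.mpr fun φ => (closure_le _).mpr fun g hg => ?_
  exact mem_pResidual_of_coprime (by simpa using hg)

theorem pResidual_pResidual : pResidual p (pResidual p G) = ⊤ := by
  have hpreimage : {g : pResidual p G | p.Coprime (orderOf g)} =
      (↑) ⁻¹' {g : G | p.Coprime (orderOf g)} := by
    ext g
    rw [Set.mem_preimage, Set.mem_ofPred_eq, Set.mem_ofPred_eq, orderOf_coe]
  exact (congrArg Subgroup.closure hpreimage).trans closure_closure_coe_preimage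

theorem pResidual_le_ker_of_isPGroup {H : Type*} [Group H] (hH : IsPGroup p H) (f : G →* H) :
    pResidual p G ≤ f.ker := by
  refine (closure_le _).mpr fun g (hg : p.Coprime (orderOf g)) => ?_
  rw [SetLike.mem_coe, MonoidHom.mem_ker, ← orderOf_eq_one_iff]
  exact Nat.eq_one_of_dvd_coprimes (hH.orderOf_coprime hg (f g)).symm (orderOf_map_dvd f g) dvd_rfl

variable [Finite G] [hp : Fact p.Prime]

theorem isPGroup_quotient_pResidual : IsPGroup p (G ⧸ pResidual p G) := by
  refine isPGroup_iff_pow_pow_eq_one.mpr fun g => ?_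
  induction g using QuotientGroup.induction_on with
  | H g =>
    refine ⟨(orderOf g).factorization p, (QuotientGroup.eq_one_iff _).mpr ?_⟩
    refine mem_pResidual_of_coprime ?_
    rw [orderOf_pow_of_dvd (pow_ne_zero _ hp.out.ne_zero) (Nat.ordProj_dvd _ _)]
    exact Nat.coprime_ordCompl hp.out (orderOf_pos g).ne'

theorem pResidual_sup_sylow (S : Sylow p G) : pResidual p G ⊔ S = ⊤ := by
  obtain ⟨n, hn⟩ := IsPGroup.iff_card.mp (isPGroup_quotient_pResidual (G := G) (p := p))
  have hdvd_pow : (pResidual p G ⊔ S).index ∣ p ^ n := hn ▸ index_dvd_of_le le_sup_left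
  exact index_eq_one.mp <| Nat.eq_one_of_dvd_coprimes
    ((hp.out.coprime_iff_not_dvd.mpr S.not_dvd_index).pow_left n) hdvd_pow
    (index_dvd_of_le le_sup_right)

theorem exists_mem_pResidual_smul_eq (P Q : Sylow p G) : ∃ c ∈ pResidual p G, c • P = Q := by
  obtain ⟨g, rfl⟩ := MulAction.exists_smul_eq G P Q
  obtain ⟨c, hc, s, hs, rfl⟩ :=
    mem_sup_of_normal_left.mp (pResidual_sup_sylow P ▸ mem_top g)
  exact ⟨c, hc, by rw [mul_smul, Sylow.smul_eq_iff_mem_normalizer.mpr (le_normalizer hs)]⟩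

theorem pResidual_isComplement'_sylow (h : p.Coprime (Nat.card (pResidual p G))) (S : Sylow p G) :
    (pResidual p G).IsComplement' (S : Subgroup G) := by
  obtain ⟨n, hn⟩ := IsPGroup.iff_card.mp S.2
  refine isComplement'_of_disjoint_and_mul_eq_univ (disjoint_of_coprime_natCard ?_) ?_
  · exact hn ▸ (h.pow_left n).symm
  · rw [← normal_mul, pResidual_sup_sylow S, coe_top]

end PResidual

theorem lt_inf_normalizer_of_isPGroup {G : Type*} [Group G] {p : ℕ} [Fact p.Prime]
    {D P : Subgroup G} [Finite P] (hP : IsPGroup p P) (h : D < P) :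
    D < P ⊓ normalizer (D : Set G) := by
  have := hP.isNilpotent
  have hlt : D.subgroupOf P < ⊤ :=
    lt_top_iff_ne_top.mpr fun htop => h.not_ge (subgroupOf_eq_top.mp htop)
  have hgrow := Group.normalizerCondition_of_isNilpotent _ hlt
  rwa [← subgroupOf_normalizer_eq h.le, ← map_subtype_lt_map_subtype, subgroupOf_map_subtype,
    subgroupOf_map_subtype, inf_eq_left.mpr h.le, inf_comm] at hgrow

theorem mem_sylow_smul_iff {G : Type*} [Group G] {p : ℕ} {g x : G} {P : Sylow p G} :
    x ∈ g • P ↔ g⁻¹ * x * g ∈ P := by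
  change x ∈ ((g • P : Sylow p G) : Subgroup G) ↔ g⁻¹ * x * g ∈ (P : Subgroup G)
  rw [Sylow.coe_subgroup_smul, mem_pointwise_smul_iff_inv_smul_mem]
  simp [MulAut.smul_def, ← map_inv]

/-- The local hypothesis of Frobenius' normal `p`-complement theorem. It is stated with elements:
every `p'`-element normalizing a `p`-subgroup `D` centralizes `D`. For finite `G` this says that
`N_G(D) / C_G(D)` is a `p`-group for all such `D`. -/
def FrobeniusCondition (p : ℕ) (G : Type*) [Group G] : Prop :=
  ∀ D : Subgroup G, IsPGroup p D → ∀ x ∈ normalizer (D : Set G),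
    p.Coprime (orderOf x) → x ∈ centralizer (D : Set G)

namespace FrobeniusCondition

variable {G : Type*} [Group G] {p : ℕ}

theorem to_subgroup (h : FrobeniusCondition p G) (L : Subgroup G) : FrobeniusCondition p L := by
  intro D hD x hx hcop
  have hcent := h (D.map L.subtype) (hD.map _) x
    (le_normalizer_map _ (mem_map_of_mem _ hx)) (by rwa [orderOf_coe])
  exact mem_centralizer_iff.mpr fun d hd =>
    Subtype.ext (mem_centralizer_iff.mp hcent d (mem_map_of_mem _ hd))

theorem pResidual_normalizer_le (h : FrobeniusCondition p G) {D : Subgroup G}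
    (hD : IsPGroup p D) :
    pResidual p (normalizer (D : Set G)) ≤
      (centralizer (D : Set G)).subgroupOf (normalizer (D : Set G)) :=
  (closure_le _).mpr fun x (hx : p.Coprime (orderOf x)) =>
    h D hD x x.2 (by rwa [orderOf_coe])

variable [Finite G] [Fact p.Prime]

theorem exists_mem_centralizer_le_smul (h : FrobeniusCondition p G) {D A B : Subgroup G}
    (hD : IsPGroup p D) (hA : IsPGroup p A) (hB : IsPGroup p B)
    (hAD : A ≤ normalizer (D : Set G)) (hBD : B ≤ normalizer (D : Set G)) :
    ∃ c ∈ centralizer (D : Set G), ∃ R : Sylow p G,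
      A ≤ R ∧ B ≤ ((c • R : Sylow p G) : Subgroup G) := by
  set N := normalizer (D : Set G)
  obtain ⟨S, hAS⟩ := (hA.comap_subtype (K := N)).exists_le_sylow
  obtain ⟨T, hBT⟩ := (hB.comap_subtype (K := N)).exists_le_sylow
  obtain ⟨R, hSR⟩ := (S.2.map N.subtype).exists_le_sylow
  obtain ⟨c, hc, rfl⟩ := exists_mem_pResidual_smul_eq S T
  refine ⟨c, h.pResidual_normalizer_le hD hc, R, fun a ha => ?_, fun b hb => ?_⟩
  · exact hSR ⟨⟨a, hAD ha⟩, hAS ha, rfl⟩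
  · have hbS : (⟨b, hBD hb⟩ : N) ∈ c • S := hBT hb
    exact mem_sylow_smul_iff.mpr (hSR ⟨_, mem_sylow_smul_iff.mp hbS, rfl⟩)

theorem exists_mem_centralizer_inf_smul_eq (h : FrobeniusCondition p G) (P Q : Sylow p G) :
    ∃ c ∈ centralizer ((P ⊓ Q : Subgroup G) : Set G), c • P = Q := by
  generalize hD : (P ⊓ Q : Subgroup G) = D
  induction D using WellFoundedGT.induction generalizing P Q with
  | ind D ih =>
  by_cases hPQ : P = Q
  · exact ⟨1, one_mem _, by rw [one_smul, hPQ]⟩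
  have hDP : D < P := by
    rw [← hD, inf_lt_left]
    exact fun hle => hPQ (Sylow.ext (P.3 Q.2 hle).symm)
  have hDQ : D < Q := by
    rw [← hD, inf_lt_right]
    exact fun hle => hPQ (Sylow.ext (Q.3 P.2 hle))
  obtain ⟨c, hc, R, hPR, hQR⟩ := h.exists_mem_centralizer_le_smul (P.2.to_le hDP.le)
    (P.2.to_le inf_le_left) (Q.2.to_le inf_le_left) inf_le_right inf_le_right
  have hDPR : D < (P ⊓ R : Subgroup G) :=
    (lt_inf_normalizer_of_isPGroup P.2 hDP).trans_le (le_inf inf_le_left hPR)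
  have hDRQ : D < (((c • R : Sylow p G) : Subgroup G) ⊓ Q) :=
    (lt_inf_normalizer_of_isPGroup Q.2 hDQ).trans_le (le_inf hQR inf_le_left)
  obtain ⟨a, ha, rfl⟩ := ih _ hDPR P R rfl
  obtain ⟨b, hb, rfl⟩ := ih _ hDRQ (c • a • P) Q rfl
  exact ⟨b * (c * a), mul_mem (centralizer_le hDRQ.le hb) (mul_mem hc (centralizer_le hDPR.le ha)),
    by rw [mul_smul, mul_smul]⟩

theorem exists_mem_mul_mem_centralizer (h : FrobeniusCondition p G) (S : Sylow p G) {n : G}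
    (hn : n ∈ normalizer ((S : Subgroup G) : Set G)) :
    ∃ s ∈ S, ∃ t ∈ centralizer ((S : Subgroup G) : Set G), s * t = n := by
  have hsup := pResidual_sup_sylow (S.subtype le_normalizer)
  obtain ⟨s, hs, t, ht, hst⟩ := mem_sup_of_normal_right.mp
    ((sup_comm _ _).trans hsup ▸ mem_top (⟨n, hn⟩ : normalizer ((S : Subgroup G) : Set G)))
  exact ⟨s, hs, t, h.pResidual_normalizer_le S.2 ht, congrArg Subtype.val hst⟩

theorem exists_mem_conj_eq_conj (h : FrobeniusCondition p G) (S : Sylow p G) {x g : G}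
    (hx : x ∈ S) (hg : g * x * g⁻¹ ∈ S) : ∃ s ∈ S, s * x * s⁻¹ = g * x * g⁻¹ := by
  obtain ⟨c, hc, hcS⟩ := h.exists_mem_centralizer_inf_smul_eq (g • S) S
  have hcx : g * x * g⁻¹ * c = c * (g * x * g⁻¹) := mem_centralizer_iff.mp hc _
    ⟨mem_sylow_smul_iff.mpr (by simpa [mul_assoc] using hx), hg⟩
  rw [← mul_smul, Sylow.smul_eq_iff_mem_normalizer] at hcS
  obtain ⟨s, hs, t, ht, hst⟩ := h.exists_mem_mul_mem_centralizer S hcS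
  have htx : x * t = t * x := mem_centralizer_iff.mp ht x hx
  refine ⟨s, hs, ?_⟩
  calc s * x * s⁻¹ = s * (x * t) * t⁻¹ * s⁻¹ := by group
    _ = (s * t) * x * (s * t)⁻¹ := by rw [htx]; group
    _ = c * (g * x * g⁻¹) * c⁻¹ := by rw [hst]; group
    _ = g * x * g⁻¹ := by rw [← hcx]; group

theorem focalSubgroup_le_commutator (h : FrobeniusCondition p G) (S : Sylow p G) :
    focalSubgroup (S : Subgroup G) ≤ ⁅(S : Subgroup G), (S : Subgroup G)⁆ := by
  refine (closure_le _).mpr ?_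
  rintro _ ⟨hgS, x, hx, u, rfl⟩
  have hcomm : ∀ y : G, ⁅x, y⁆ = x * (y * x⁻¹ * y⁻¹) := fun y => by
    rw [commutatorElement_def]; group
  have hconj : u * x⁻¹ * u⁻¹ ∈ (S : Subgroup G) := by
    rwa [hcomm, mul_mem_cancel_left hx] at hgS
  obtain ⟨s, hs, hsu⟩ := h.exists_mem_conj_eq_conj S (inv_mem hx) hconj
  rw [hcomm, ← hsu, ← hcomm]
  exact commutator_mem_commutator hx hs

theorem pResidual_ne_top (h : FrobeniusCondition p G) (hdvd : p ∣ Nat.card G) :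
    pResidual p G ≠ ⊤ := by
  intro htop
  let S : Sylow p G := default
  have hker : S.transferFocal.ker = ⊤ :=
    top_le_iff.mp (htop ▸ pResidual_le_ker_of_isPGroup (S.2.to_quotient _) S.transferFocal)
  have hfocal : (S : Subgroup G) = focalSubgroup (S : Subgroup G) := by
    simpa only [hker, top_inf_eq] using ker_transferFocal_inf_eq_focalSubgroup S
  exact (commutator_lt_of_isPGroup S.2 (S.ne_bot_of_dvd_card hdvd)).not_ge
    (hfocal.le.trans (h.focalSubgroup_le_commutator S))

theorem coprime_card_pResidual (h : FrobeniusCondition p G) :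
    p.Coprime (Nat.card (pResidual p G)) :=
  (Nat.Prime.coprime_iff_not_dvd Fact.out).mpr fun hdvd =>
    (h.to_subgroup _).pResidual_ne_top hdvd pResidual_pResidual

end FrobeniusCondition

theorem frobeniusCondition_of_commute_of_pow_eq_one {G : Type*} [Group G] [Finite G] {p q : ℕ}
    [Fact p.Prime] (hpq : p ∣ q) (hpq₂ : p ∣ q.choose 2)
    (hcomm : ∀ w x : G, w ^ q = 1 → p.Coprime (orderOf x) → Commute x w) :
    FrobeniusCondition p G := by
  intro D hD x hx hcop
  have hconj : p.Coprime (orderOf (MulAut.conj x)) :=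
    hcop.of_dvd_right (orderOf_map_dvd MulAut.conj x)
  have hfix := mulAut_apply_eq_self_of_pow_eq_one hpq hpq₂ hconj hD
    (fun u hu => (mem_normalizer_iff.mp hx u).mp hu)
    fun w _ hw => mul_inv_eq_of_eq_mul (hcomm w x hw hcop).eq
  exact mem_centralizer_iff.mpr fun d hd => (mul_inv_eq_iff_eq_mul.mp (hfix d hd)).symm

-- `q` is `p` for odd `p`; since `2` does not divide `choose 2 2`, `q` is `4` for `p = 2`.
theorem exists_dvd_choose_two_forall_orderOf {p : ℕ} (hp : p.Prime) (G : Type*) [Group G] :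
    ∃ q, p ∣ q ∧ p ∣ q.choose 2 ∧
      ∀ w : G, w ^ q = 1 → w = 1 ∨ orderOf w = p ∨ p = 2 ∧ orderOf w = 4 := by
  rcases eq_or_ne p 2 with rfl | hp2
  · refine ⟨4, by norm_num, by decide, fun w hw => ?_⟩
    have hdvd : orderOf w ∣ 2 ^ 2 := orderOf_dvd_of_pow_eq_one hw
    obtain ⟨k, hk, hwk⟩ := (Nat.dvd_prime_pow hp).mp hdvd
    interval_cases k
    · exact .inl (orderOf_eq_one_iff.mp hwk)
    · exact .inr (.inl hwk)
    · exact .inr (.inr ⟨rfl, hwk⟩)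
  · have := Fact.mk hp
    refine ⟨p, dvd_rfl, hp.dvd_choose_self two_ne_zero (hp.two_le.lt_of_ne' hp2), fun w hw => ?_⟩
    exact or_iff_not_imp_left.mpr fun hne => .inl (orderOf_eq_prime hw hne)

theorem stmt_16_general {G : Type*} [Group G] [Finite G] (p : ℕ) (hp : p.Prime) (S : Sylow p G)
    (hP : ∀ g x : G, orderOf g = p → p.Coprime (orderOf x) → Commute x g)
    (h4 : p = 2 → ∀ g x : G, orderOf g = 4 → p.Coprime (orderOf x) → Commute x g) :
    ∃ N : Subgroup G, N.Normal ∧ N.IsComplement' (S : Subgroup G) := by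
  have := Fact.mk hp
  obtain ⟨q, hpq, hpq₂, hq⟩ := exists_dvd_choose_two_forall_orderOf hp G
  have hfrob : FrobeniusCondition p G := by
    refine frobeniusCondition_of_commute_of_pow_eq_one hpq hpq₂ fun w x hw hx => ?_
    rcases hq w hw with rfl | hwp | ⟨hp2, hw4⟩
    · exact Commute.one_right x
    · exact hP w x hwp hx
    · exact h4 hp2 w x hw4 hx
  exact ⟨pResidual p G, inferInstance, pResidual_isComplement'_sylow hfrob.coprime_card_pResidual S⟩

/-- Itô's theorem: if every element of order `p` (and of order `4` when `p = 2`)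
is central, then `G` is `p`-nilpotent, i.e. has a normal `p`-complement. -/
theorem stmt_16 {G : Type*} [Group G] [Finite G] (p : ℕ) (hp : p.Prime)
    (S : Sylow p G)
    (hP : ∀ g : G, orderOf g = p → g ∈ Subgroup.center G)
    (h4 : p = 2 → ∀ g : G, orderOf g = 4 → g ∈ Subgroup.center G) :
    ∃ N : Subgroup G, N.Normal ∧ N.IsComplement' (S : Subgroup G) :=
  stmt_16_general p hp S (fun g x hg _ => Subgroup.mem_center_iff.mp (hP g hg) x)
    fun hp2 g x hg _ => Subgroup.mem_center_iff.mp (h4 hp2 g hg) x
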